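/- There exists a constant C > 0 depending only on Ω, a, b and c such that for every mesh and its finite element solution u_h, the error satisfies the a posteriori bound ‖(u − u_h)'‖_Ω² ≤ C Σ_{i=1}^N h_i² ‖r_h‖_{K_i}², where ‖r_h‖_{K_i}² = ∫_{K_i} |r_h|² dx. -/

import Mathlib

/-!
Setting of Huang–He, "Error analysis for equidistributing meshes":
the boundary value problem  −(a u')' + b u' + c u = f on Ω = (0,1), u(0)=u(1)=0,
its linear finite element discretization on a mesh 0 = x₀ < ⋯ < x_N = 1,
and the residual-based equidistribution quantities.
-/

noncomputable section
open MeasureTheory Real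

namespace EquidMesh

/-- L² norm on (0,1). -/
def L2 (g : ℝ → ℝ) : ℝ := Real.sqrt (∫ t in (0:ℝ)..1, (g t)^2)

/-- L¹ norm on (0,1). -/
def L1 (g : ℝ → ℝ) : ℝ := ∫ t in (0:ℝ)..1, |g t|

/-- The L^{2/3} quasi-norm on (0,1): (∫₀¹ |g|^{2/3})^{3/2}. -/
def Lp23 (g : ℝ → ℝ) : ℝ := (∫ t in (0:ℝ)..1, |g t| ^ ((2:ℝ)/3)) ^ ((3:ℝ)/2)

/-- L^∞ norm (essential supremum of |g|) on (0,1). -/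
def Linf (g : ℝ → ℝ) : ℝ := essSup (fun t => |g t|) (volume.restrict (Set.Ioo (0:ℝ) 1))

/-- Membership in L²(0,1). -/
def MemL2 (g : ℝ → ℝ) : Prop :=
  Measurable g ∧ IntervalIntegrable (fun t => (g t)^2) volume 0 1

/-- Membership in L^∞(0,1). -/
def MemLinf (g : ℝ → ℝ) : Prop :=
  Measurable g ∧ ∃ M : ℝ, ∀ᵐ x ∂(volume.restrict (Set.Ioo (0:ℝ) 1)), |g x| ≤ M

/-- `g` is absolutely continuous on [0,1] with derivative `g' ∈ L¹(0,1)`. -/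
def HasL1Deriv (g g' : ℝ → ℝ) : Prop :=
  Measurable g' ∧ IntervalIntegrable g' volume 0 1 ∧
    ∀ x ∈ Set.Icc (0:ℝ) 1, g x = g 0 + ∫ t in (0:ℝ)..x, g' t

/-- A function in H¹(0,1): absolutely continuous on [0,1], carried together with its
(a.e.) derivative, which lies in L²(0,1). -/
structure H1 where
  val : ℝ → ℝ
  dval : ℝ → ℝ
  dval_meas : Measurable dval
  dval_int : IntervalIntegrable dval volume 0 1
  dval_sq_int : IntervalIntegrable (fun t => (dval t)^2) volume 0 1
  ftc : ∀ x ∈ Set.Icc (0:ℝ) 1, val x = val 0 + ∫ t in (0:ℝ)..x, dval t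

/-- `u ∈ H²(0,1)`: the derivative `u'` is absolutely continuous with `u'' ∈ L²(0,1)`. -/
def H1.IsH2 (u : H1) : Prop :=
  ∃ u'' : ℝ → ℝ, Measurable u'' ∧ IntervalIntegrable u'' volume 0 1 ∧
    IntervalIntegrable (fun t => (u'' t)^2) volume 0 1 ∧
    ∀ x ∈ Set.Icc (0:ℝ) 1, u.dval x = u.dval 0 + ∫ t in (0:ℝ)..x, u'' t

/-- The coefficients of the elliptic problem on Ω = (0,1):
`a, b ∈ W^{1,∞}(Ω)`, `c ∈ L^∞(Ω)`, `a ≥ a₀ > 0`, and `c − b'/2 ≥ 0` a.e. -/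
structure Coeffs where
  a : ℝ → ℝ
  b : ℝ → ℝ
  c : ℝ → ℝ
  a' : ℝ → ℝ
  b' : ℝ → ℝ
  a0 : ℝ
  a0_pos : 0 < a0
  a_lb : ∀ x ∈ Set.Icc (0:ℝ) 1, a0 ≤ a x
  a'_meas : Measurable a'
  b'_meas : Measurable b'
  c_meas : Measurable c
  a'_int : IntervalIntegrable a' volume 0 1
  b'_int : IntervalIntegrable b' volume 0 1
  a'_bdd : ∃ M : ℝ, ∀ᵐ x ∂(volume.restrict (Set.Ioo (0:ℝ) 1)), |a' x| ≤ M
  b'_bdd : ∃ M : ℝ, ∀ᵐ x ∂(volume.restrict (Set.Ioo (0:ℝ) 1)), |b' x| ≤ M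
  c_bdd : ∃ M : ℝ, ∀ᵐ x ∂(volume.restrict (Set.Ioo (0:ℝ) 1)), |c x| ≤ M
  ftc_a : ∀ x ∈ Set.Icc (0:ℝ) 1, a x = a 0 + ∫ t in (0:ℝ)..x, a' t
  ftc_b : ∀ x ∈ Set.Icc (0:ℝ) 1, b x = b 0 + ∫ t in (0:ℝ)..x, b' t
  cb_nonneg : ∀ᵐ x ∂(volume.restrict (Set.Ioo (0:ℝ) 1)), 0 ≤ c x - b' x / 2

/-- The bilinear form B(u,v) = ∫₀¹ (a u' v' + b u' v + c u v) dx. -/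
def Coeffs.B (P : Coeffs) (u v : H1) : ℝ :=
  ∫ t in (0:ℝ)..1,
    (P.a t * u.dval t * v.dval t + P.b t * u.dval t * v.val t + P.c t * u.val t * v.val t)

/-- The right-hand side functional (f, v) = ∫₀¹ f v dx. -/
def ip (f : ℝ → ℝ) (v : H1) : ℝ := ∫ t in (0:ℝ)..1, f t * v.val t

/-- `u ∈ H¹₀(Ω)` is the weak solution: B(u,v) = (f,v) for all v ∈ H¹₀(Ω). -/
def Coeffs.IsWeakSolution (P : Coeffs) (f : ℝ → ℝ) (u : H1) : Prop :=
  u.val 0 = 0 ∧ u.val 1 = 0 ∧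
    ∀ v : H1, v.val 0 = 0 → v.val 1 = 0 → P.B u v = ip f v

/-- A mesh of N elements of Ω = (0,1): 0 = x₀ < x₁ < ⋯ < x_N = 1. -/
structure Mesh (N : ℕ) where
  x : ℕ → ℝ
  x_zero : x 0 = 0
  x_last : x N = 1
  x_mono : ∀ i < N, x i < x (i+1)

/-- Element length (the element of index `i` is `(x i, x (i+1))`, `0 ≤ i < N`). -/
def Mesh.h {N : ℕ} (m : Mesh N) (i : ℕ) : ℝ := m.x (i+1) - m.x i

/-- `v` is piecewise linear with respect to the mesh: its derivative is constant
inside each element. -/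
def Mesh.IsPL {N : ℕ} (m : Mesh N) (v : H1) : Prop :=
  ∀ i < N, ∃ s : ℝ, ∀ t ∈ Set.Ioo (m.x i) (m.x (i+1)), v.dval t = s

/-- `uh` is the linear finite element solution on the mesh `m`:
a continuous piecewise linear function vanishing at 0 and 1 with
B(u_h, v_h) = (f, v_h) for all piecewise linear v_h vanishing at 0 and 1. -/
def Coeffs.IsFESolution (P : Coeffs) (f : ℝ → ℝ) {N : ℕ} (m : Mesh N) (uh : H1) : Prop :=
  uh.val 0 = 0 ∧ uh.val 1 = 0 ∧ m.IsPL uh ∧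
    ∀ v : H1, v.val 0 = 0 → v.val 1 = 0 → m.IsPL v → P.B uh v = ip f v

/-- The residual of `w`: r = f + a' w' − b w' − c w. -/
def Coeffs.res (P : Coeffs) (f : ℝ → ℝ) (w : H1) : ℝ → ℝ :=
  fun t => f t + P.a' t * w.dval t - P.b t * w.dval t - P.c t * w.val t

/-- The element L² average ⟨g⟩_i = (h_i⁻¹ ∫_{K_i} g²)^{1/2}. -/
def Mesh.avg {N : ℕ} (m : Mesh N) (g : ℝ → ℝ) (i : ℕ) : ℝ :=
  Real.sqrt ((1 / m.h i) * ∫ t in (m.x i)..(m.x (i+1)), (g t)^2)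

/-- The intensity parameter α_h = (Σ_i h_i ⟨g⟩_i^{2/3})³. -/
def Mesh.alpha {N : ℕ} (m : Mesh N) (g : ℝ → ℝ) : ℝ :=
  (∑ i ∈ Finset.range N, m.h i * (m.avg g i) ^ ((2:ℝ)/3)) ^ 3

/-- The adaptation function value ρ_i = (1 + α_h⁻¹ ⟨g⟩_i²)^{1/3}. -/
def Mesh.rho {N : ℕ} (m : Mesh N) (g : ℝ → ℝ) (i : ℕ) : ℝ :=
  (1 + (m.alpha g)⁻¹ * (m.avg g i)^2) ^ ((1:ℝ)/3)

/-- σ_h = Σ_i ρ_i h_i. -/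
def Mesh.sigma {N : ℕ} (m : Mesh N) (g : ℝ → ℝ) : ℝ :=
  ∑ i ∈ Finset.range N, m.rho g i * m.h i

/-- The mesh equidistributes (the piecewise constant adaptation function built from) `g`:
ρ_i h_i = σ_h / N for all elements. -/
def Mesh.IsEquidistributing {N : ℕ} (m : Mesh N) (g : ℝ → ℝ) : Prop :=
  ∀ i < N, m.rho g i * m.h i = m.sigma g / (N:ℝ)

/-- Membership in the mesh set S_N: 1/(ρ₀ N) ≤ h_i ≤ 2/N for all i. -/
def Mesh.InS {N : ℕ} (m : Mesh N) (ρ0 : ℝ) : Prop :=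
  ∀ i < N, 1 / (ρ0 * (N:ℝ)) ≤ m.h i ∧ m.h i ≤ 2 / (N:ℝ)

/-- The maximum norm distance ‖X − X̃‖_∞ between two meshes with the same N. -/
def meshDist {N : ℕ} (m m' : Mesh N) : ℝ :=
  (Finset.range (N+1)).sup' (Finset.nonempty_range_iff.mpr (Nat.succ_ne_zero N))
    (fun i => |m.x i - m'.x i|)

/-- The energy norm squared ‖v‖_E² = ∫₀¹ (a v'² + (c − b'/2) v²) dx. -/
def Coeffs.energySq (P : Coeffs) (v : H1) : ℝ :=
  ∫ t in (0:ℝ)..1, (P.a t * (v.dval t)^2 + (P.c t - P.b' t / 2) * (v.val t)^2)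


/-! Let `e = u - u_h` and `w = e - I e`, where `I` is piecewise linear interpolation at the mesh
points. Coercivity and Galerkin orthogonality give `a₀ ‖e'‖² ≤ B(e, e) = B(e, w)`. The function
`a w` vanishes at the mesh points, so its derivative is orthogonal to the piecewise constant `u_h'`;
this turns `B(e, w)` into `∫ r_h w`. Finally `‖w‖ ≤ h_i ‖w'‖ ≤ h_i ‖e'‖` on `K_i`, and the
Cauchy–Schwarz inequality, on each element and then over the elements, yields the estimate with
`C = a₀⁻²`. -/

section Integral

open Set
open scoped Interval

lemma sq_integral_mul_le {α : Type*} [MeasurableSpace α] {μ : Measure α} {f g : α → ℝ}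
    (hf : MemLp f 2 μ) (hg : MemLp g 2 μ) :
    (∫ x, f x * g x ∂μ) ^ 2 ≤ (∫ x, f x ^ 2 ∂μ) * ∫ x, g x ^ 2 ∂μ := by
  have inner_toLp {φ ψ : α → ℝ} (hφ : MemLp φ 2 μ) (hψ : MemLp ψ 2 μ) :
      inner ℝ (hφ.toLp φ) (hψ.toLp ψ) = ∫ x, φ x * ψ x ∂μ := by
    rw [L2.inner_def]
    refine integral_congr_ae ?_
    filter_upwards [hφ.coeFn_toLp, hψ.coeFn_toLp] with x hx hy
    rw [hx, hy, real_inner_eq_re_inner, RCLike.inner_apply, conj_trivial, mul_comm,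
      RCLike.re_to_real]
  simpa only [inner_toLp, sq] using real_inner_mul_inner_self_le (hf.toLp f) (hg.toLp g)

variable {f g : ℝ → ℝ} {a b c d : ℝ} {μ : Measure ℝ}

instance isFiniteMeasure_restrict_uIoc [IsLocallyFiniteMeasure μ] :
    IsFiniteMeasure (μ.restrict (Ι a b)) :=
  ⟨by rw [Measure.restrict_apply_univ]; exact measure_Ioc_lt_top⟩

lemma sq_intervalIntegral_mul_le (hf : MemLp f 2 (μ.restrict (Ι a b)))
    (hg : MemLp g 2 (μ.restrict (Ι a b))) :
    (∫ x in a..b, f x * g x ∂μ) ^ 2 ≤ (∫ x in a..b, f x ^ 2 ∂μ) * ∫ x in a..b, g x ^ 2 ∂μ := by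
  simp only [intervalIntegral.intervalIntegral_eq_integral_uIoc]
  split_ifs <;> simpa using sq_integral_mul_le hf hg

lemma memLp_restrict_uIoc_mono {p : ENNReal} (hf : MemLp f p (μ.restrict (Ι a b)))
    (h : uIcc c d ⊆ uIcc a b) : MemLp f p (μ.restrict (Ι c d)) :=
  hf.mono_measure (Measure.restrict_mono (uIoc_subset_uIoc_of_uIcc_subset_uIcc h) le_rfl)

lemma intervalIntegrable_mul_of_memLp_two (hf : MemLp f 2 (μ.restrict (Ι a b)))
    (hg : MemLp g 2 (μ.restrict (Ι a b))) : IntervalIntegrable (fun x => f x * g x) μ a b :=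
  intervalIntegrable_iff.2 (hf.integrable_mul hg)

lemma intervalIntegrable_sq_of_memLp_two (hf : MemLp f 2 (μ.restrict (Ι a b))) :
    IntervalIntegrable (fun x => f x ^ 2) μ a b :=
  intervalIntegrable_iff.2 hf.integrable_sq

lemma memLp_top_uIoc_of_continuousOn (hf : ContinuousOn f (uIcc a b)) :
    MemLp f ⊤ (μ.restrict (Ι a b)) := by
  obtain ⟨M, hM⟩ := isCompact_uIcc.exists_bound_of_continuousOn hf
  refine memLp_top_of_bound ((hf.mono uIoc_subset_uIcc).aestronglyMeasurable
    measurableSet_uIoc) M ?_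
  filter_upwards [ae_restrict_mem measurableSet_uIoc] with x hx
  exact hM x (uIoc_subset_uIcc hx)

lemma integral_sq_le_integral_add_const_sq (hab : a ≤ b) (hg : MemLp g 2 (volume.restrict (Ι a b)))
    (hmean : ∫ x in a..b, g x = 0) (s : ℝ) :
    ∫ x in a..b, g x ^ 2 ≤ ∫ x in a..b, (g x + s) ^ 2 := by
  have hg1 : IntervalIntegrable g volume a b :=
    intervalIntegrable_iff.2 (hg.integrable one_le_two)
  have pythagoras : ∫ x in a..b, (g x + s) ^ 2 = (∫ x in a..b, g x ^ 2) + (b - a) * s ^ 2 := by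
    calc ∫ x in a..b, (g x + s) ^ 2
        = ∫ x in a..b, (g x ^ 2 + 2 * s * g x + s ^ 2) := by
          congr 1; ext x; ring
      _ = (∫ x in a..b, g x ^ 2) + 2 * s * (∫ x in a..b, g x) + (b - a) * s ^ 2 := by
          have hg2 := intervalIntegrable_sq_of_memLp_two hg
          rw [intervalIntegral.integral_add (hg2.add (hg1.const_mul _)) (by simp),
            intervalIntegral.integral_add hg2 (hg1.const_mul _),
            intervalIntegral.integral_const_mul, intervalIntegral.integral_const, smul_eq_mul]
      _ = (∫ x in a..b, g x ^ 2) + (b - a) * s ^ 2 := by rw [hmean]; ring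
  rw [pythagoras]
  exact le_add_of_nonneg_right (mul_nonneg (sub_nonneg.2 hab) (sq_nonneg s))

end Integral

section AbsolutelyContinuous

open Set Filter Topology
open scoped Interval

lemma absolutelyContinuousOnInterval_congr {X : Type*} [PseudoMetricSpace X] {F G : ℝ → X}
    {a b : ℝ} (hF : AbsolutelyContinuousOnInterval F a b) (h : EqOn F G (uIcc a b)) :
    AbsolutelyContinuousOnInterval G a b := by
  refine Tendsto.congr' ?_ hF
  filter_upwards [mem_inf_of_right (mem_principal_self _)] with E hE
  refine Finset.sum_congr rfl fun i hi => ?_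
  rw [h (hE.1 i hi).1, h (hE.1 i hi).2]

/-- `F` is absolutely continuous on the interval with end points `a` and `b`, and `f` is its
derivative there. The derivative is prescribed only almost everywhere, so that elements of
`W^{1,1}` carry a freely chosen representative of their weak derivative. -/
structure HasACDeriv (F f : ℝ → ℝ) (a b : ℝ) : Prop where
  absolutelyContinuousOnInterval : AbsolutelyContinuousOnInterval F a b
  ae_hasDerivAt : ∀ᵐ x, x ∈ uIcc a b → HasDerivAt F (f x) x

namespace HasACDeriv

variable {F G f g : ℝ → ℝ} {a b c d : ℝ}

lemma of_eq_add_integral (hf : IntervalIntegrable f volume a b)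
    (hF : ∀ x ∈ uIcc a b, F x = F a + ∫ t in a..x, f t) : HasACDeriv F f a b where
  absolutelyContinuousOnInterval := by
    have hconst : AbsolutelyContinuousOnInterval (fun _ : ℝ => F a) a b :=
      (LipschitzWith.const (F a)).lipschitzOnWith.absolutelyContinuousOnInterval
    exact absolutelyContinuousOnInterval_congr
      (hconst.fun_add (hf.absolutelyContinuousOnInterval_intervalIntegral left_mem_uIcc))
      fun x hx => (hF x hx).symm
  ae_hasDerivAt := by
    filter_upwards [hf.ae_hasDerivAt_integral, volume.ae_ne (min a b), volume.ae_ne (max a b)]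
      with x hderiv hmin hmax hx
    have hnhds : uIcc a b ∈ 𝓝 x :=
      Icc_mem_nhds (lt_of_le_of_ne hx.1 hmin.symm) (lt_of_le_of_ne hx.2 hmax)
    exact ((hderiv hx a left_mem_uIcc).const_add (F a)).congr_of_eventuallyEq
      (eventually_of_mem hnhds hF)

lemma mono (hF : HasACDeriv F f a b) (h : uIcc c d ⊆ uIcc a b) : HasACDeriv F f c d where
  absolutelyContinuousOnInterval := hF.absolutelyContinuousOnInterval.mono h
  ae_hasDerivAt := hF.ae_hasDerivAt.mono fun _ hx hxcd => hx (h hxcd)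

lemma mul (hF : HasACDeriv F f a b) (hG : HasACDeriv G g a b) :
    HasACDeriv (fun x => F x * G x) (fun x => f x * G x + F x * g x) a b where
  absolutelyContinuousOnInterval :=
    hF.absolutelyContinuousOnInterval.fun_mul hG.absolutelyContinuousOnInterval
  ae_hasDerivAt := by
    filter_upwards [hF.ae_hasDerivAt, hG.ae_hasDerivAt] with x hFx hGx hx
    exact (hFx hx).fun_mul (hGx hx)

lemma continuousOn (hF : HasACDeriv F f a b) : ContinuousOn F (uIcc a b) :=
  hF.absolutelyContinuousOnInterval.continuousOn

lemma ae_deriv_eq (hF : HasACDeriv F f a b) : ∀ᵐ x, x ∈ Ι a b → deriv F x = f x :=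
  hF.ae_hasDerivAt.mono fun _ hx hxab => (hx (uIoc_subset_uIcc hxab)).deriv

lemma integral_eq_sub (hF : HasACDeriv F f a b) : ∫ x in a..b, f x = F b - F a := by
  rw [← hF.absolutelyContinuousOnInterval.integral_deriv_eq_sub]
  exact (intervalIntegral.integral_congr_ae hF.ae_deriv_eq).symm

lemma sq_le_mul_integral_sq (hF : HasACDeriv F f a b) (hf : MemLp f 2 (volume.restrict (Ι a b)))
    (hFa : F a = 0) {x : ℝ} (hx : x ∈ Icc a b) :
    F x ^ 2 ≤ (b - a) * ∫ t in a..b, f t ^ 2 := by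
  have hab : a ≤ b := hx.1.trans hx.2
  have hsub : uIcc a x ⊆ uIcc a b := uIcc_subset_uIcc left_mem_uIcc (Icc_subset_uIcc hx)
  have hnonneg : 0 ≤ ∫ t in a..x, f t ^ 2 :=
    intervalIntegral.integral_nonneg_of_forall hx.1 fun t => sq_nonneg (f t)
  have hle : ∫ t in a..x, f t ^ 2 ≤ ∫ t in a..b, f t ^ 2 :=
    intervalIntegral.integral_mono_interval le_rfl hx.1 hx.2
      (Eventually.of_forall fun t => sq_nonneg (f t)) (intervalIntegrable_sq_of_memLp_two hf)
  calc F x ^ 2 = (∫ t in a..x, 1 * f t) ^ 2 := by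
        simp only [one_mul, (hF.mono hsub).integral_eq_sub, hFa, sub_zero]
    _ ≤ (∫ _ in a..x, (1 : ℝ) ^ 2) * ∫ t in a..x, f t ^ 2 :=
        sq_intervalIntegral_mul_le (memLp_const 1) (memLp_restrict_uIoc_mono hf hsub)
    _ = (x - a) * ∫ t in a..x, f t ^ 2 := by simp
    _ ≤ (b - a) * ∫ t in a..b, f t ^ 2 :=
        mul_le_mul (sub_le_sub_right hx.2 a) hle hnonneg (sub_nonneg.2 hab)

lemma integral_sq_le (hF : HasACDeriv F f a b) (hf : MemLp f 2 (volume.restrict (Ι a b)))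
    (hab : a ≤ b) (hFa : F a = 0) :
    ∫ x in a..b, F x ^ 2 ≤ (b - a) ^ 2 * ∫ x in a..b, f x ^ 2 := by
  calc ∫ x in a..b, F x ^ 2 ≤ ∫ _ in a..b, (b - a) * ∫ t in a..b, f t ^ 2 :=
        intervalIntegral.integral_mono_on hab (hF.continuousOn.pow 2).intervalIntegrable
          intervalIntegrable_const fun _ hx => hF.sq_le_mul_integral_sq hf hFa hx
    _ = (b - a) ^ 2 * ∫ x in a..b, f x ^ 2 := by
        rw [intervalIntegral.integral_const, smul_eq_mul]; ring

end HasACDeriv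

end AbsolutelyContinuous

section UnitInterval

open Set
open scoped Interval

lemma memLp_top_of_ae_abs_le {g : ℝ → ℝ} (hg : Measurable g)
    (hbdd : ∃ M : ℝ, ∀ᵐ x ∂(volume.restrict (Ioo (0 : ℝ) 1)), |g x| ≤ M) :
    MemLp g ⊤ (volume.restrict (Ι (0 : ℝ) 1)) := by
  obtain ⟨M, hM⟩ := hbdd
  rw [restrict_Ioo_eq_restrict_Ioc, ← uIoc_of_le zero_le_one] at hM
  exact memLp_top_of_bound hg.aestronglyMeasurable M hM

lemma MemL2.memLp {g : ℝ → ℝ} (hg : MemL2 g) : MemLp g 2 (volume.restrict (Ι (0 : ℝ) 1)) :=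
  (memLp_two_iff_integrable_sq hg.1.aestronglyMeasurable).2 (intervalIntegrable_iff.1 hg.2)

lemma L2_sq (g : ℝ → ℝ) : L2 g ^ 2 = ∫ t in (0 : ℝ)..1, g t ^ 2 :=
  Real.sq_sqrt (intervalIntegral.integral_nonneg_of_forall zero_le_one fun t => sq_nonneg (g t))

lemma hasACDeriv_of_eq_add_integral_unit {F f : ℝ → ℝ} (hf : IntervalIntegrable f volume 0 1)
    (hF : ∀ x ∈ Icc (0 : ℝ) 1, F x = F 0 + ∫ t in (0 : ℝ)..x, f t) : HasACDeriv F f 0 1 :=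
  .of_eq_add_integral hf (by rwa [uIcc_of_le zero_le_one])

namespace H1

lemma hasACDeriv (v : H1) : HasACDeriv v.val v.dval 0 1 :=
  hasACDeriv_of_eq_add_integral_unit v.dval_int v.ftc

lemma memLp_dval (v : H1) : MemLp v.dval 2 (volume.restrict (Ι (0 : ℝ) 1)) :=
  MemL2.memLp ⟨v.dval_meas, v.dval_sq_int⟩

lemma memLp_val (v : H1) : MemLp v.val 2 (volume.restrict (Ι (0 : ℝ) 1)) :=
  (memLp_top_uIoc_of_continuousOn v.hasACDeriv.continuousOn).mono_exponent le_top

/-- The function in `H¹(0,1)` with value `y` at `0` and derivative `g ∈ L²(0,1)`. -/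
def ofDeriv (y : ℝ) (g : ℝ → ℝ) (hg : MemL2 g) : H1 where
  val x := y + ∫ t in (0 : ℝ)..x, g t
  dval := g
  dval_meas := hg.1
  dval_int := intervalIntegrable_iff.2 (hg.memLp.integrable one_le_two)
  dval_sq_int := hg.2
  ftc x _ := by rw [intervalIntegral.integral_same, add_zero]

/-- The difference of two functions in `H¹(0,1)`. -/
def sub (u v : H1) : H1 where
  val t := u.val t - v.val t
  dval t := u.dval t - v.dval t
  dval_meas := u.dval_meas.sub v.dval_meas
  dval_int := u.dval_int.sub v.dval_int
  dval_sq_int := intervalIntegrable_sq_of_memLp_two (u.memLp_dval.sub v.memLp_dval)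
  ftc x hx := by
    have hsub : uIcc 0 x ⊆ uIcc (0 : ℝ) 1 :=
      uIcc_subset_uIcc left_mem_uIcc (Icc_subset_uIcc hx)
    rw [intervalIntegral.integral_sub (u.dval_int.mono_set hsub) (v.dval_int.mono_set hsub),
      u.ftc x hx, v.ftc x hx]
    ring

end H1

namespace Coeffs

variable (P : Coeffs) (u v w : H1)

lemma hasACDeriv_a : HasACDeriv P.a P.a' 0 1 := hasACDeriv_of_eq_add_integral_unit P.a'_int P.ftc_a

lemma hasACDeriv_b : HasACDeriv P.b P.b' 0 1 := hasACDeriv_of_eq_add_integral_unit P.b'_int P.ftc_b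

lemma memLp_a_mul_dval : MemLp (fun t => P.a t * u.dval t) 2 (volume.restrict (Ι (0 : ℝ) 1)) :=
  u.memLp_dval.mul' (memLp_top_uIoc_of_continuousOn P.hasACDeriv_a.continuousOn)

lemma memLp_b_mul_dval : MemLp (fun t => P.b t * u.dval t) 2 (volume.restrict (Ι (0 : ℝ) 1)) :=
  u.memLp_dval.mul' (memLp_top_uIoc_of_continuousOn P.hasACDeriv_b.continuousOn)

lemma memLp_c_mul_val : MemLp (fun t => P.c t * u.val t) 2 (volume.restrict (Ι (0 : ℝ) 1)) :=
  u.memLp_val.mul' (memLp_top_of_ae_abs_le P.c_meas P.c_bdd)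

lemma intervalIntegrable_B :
    IntervalIntegrable (fun t => P.a t * u.dval t * v.dval t + P.b t * u.dval t * v.val t
      + P.c t * u.val t * v.val t) volume 0 1 :=
  ((intervalIntegrable_mul_of_memLp_two (P.memLp_a_mul_dval u) v.memLp_dval).add
    (intervalIntegrable_mul_of_memLp_two (P.memLp_b_mul_dval u) v.memLp_val)).add
    (intervalIntegrable_mul_of_memLp_two (P.memLp_c_mul_val u) v.memLp_val)

lemma B_sub_left : P.B (u.sub v) w = P.B u w - P.B v w := by
  unfold B
  rw [← intervalIntegral.integral_sub (P.intervalIntegrable_B u w) (P.intervalIntegrable_B v w)]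
  congr 1; ext t; simp only [H1.sub]; ring

lemma B_sub_right : P.B u (v.sub w) = P.B u v - P.B u w := by
  unfold B
  rw [← intervalIntegral.integral_sub (P.intervalIntegrable_B u v) (P.intervalIntegrable_B u w)]
  congr 1; ext t; simp only [H1.sub]; ring

lemma intervalIntegrable_energy :
    IntervalIntegrable (fun t => P.a t * v.dval t ^ 2 + (P.c t - P.b' t / 2) * v.val t ^ 2)
      volume 0 1 := by
  have hcont : ContinuousOn (fun t => v.val t ^ 2) (uIcc 0 1) := v.hasACDeriv.continuousOn.pow 2
  have hc : IntervalIntegrable P.c volume 0 1 := intervalIntegrable_iff.2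
    ((memLp_top_of_ae_abs_le P.c_meas P.c_bdd).integrable le_top)
  exact (v.dval_sq_int.continuousOn_mul P.hasACDeriv_a.continuousOn).add
    ((hc.sub (P.b'_int.div_const 2)).mul_continuousOn hcont)

variable {v} in
lemma B_self_eq_energySq (h0 : v.val 0 = 0) (h1 : v.val 1 = 0) : P.B v v = P.energySq v := by
  have hbvv := P.hasACDeriv_b.mul (v.hasACDeriv.mul v.hasACDeriv)
  rw [← sub_eq_zero, B, energySq, ← intervalIntegral.integral_sub (P.intervalIntegrable_B v v)
    (P.intervalIntegrable_energy v)]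
  calc _ = ∫ t in (0 : ℝ)..1, 1 / 2 * (P.b' t * (v.val t * v.val t)
          + P.b t * (v.dval t * v.val t + v.val t * v.dval t)) := by
        congr 1; ext t; ring
    _ = 0 := by
        rw [intervalIntegral.integral_const_mul, hbvv.integral_eq_sub, h0, h1]; ring

lemma a0_mul_integral_dval_sq_le_energySq :
    P.a0 * ∫ t in (0 : ℝ)..1, v.dval t ^ 2 ≤ P.energySq v := by
  rw [← intervalIntegral.integral_const_mul]
  refine intervalIntegral.integral_mono_ae_restrict zero_le_one (v.dval_sq_int.const_mul _)
    (P.intervalIntegrable_energy v) ?_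
  have hcb := P.cb_nonneg
  rw [restrict_Ioo_eq_restrict_Icc] at hcb
  filter_upwards [hcb, ae_restrict_mem measurableSet_Icc] with t hcb_t ht
  exact le_add_of_le_of_nonneg (mul_le_mul_of_nonneg_right (P.a_lb t ht) (sq_nonneg _))
    (mul_nonneg hcb_t (sq_nonneg _))

end Coeffs

variable {f : ℝ → ℝ}

lemma MemL2.intervalIntegrable_mul_val (hf : MemL2 f) (v : H1) :
    IntervalIntegrable (fun t => f t * v.val t) volume 0 1 :=
  intervalIntegrable_mul_of_memLp_two hf.memLp v.memLp_val

lemma MemL2.ip_sub (hf : MemL2 f) (v w : H1) : ip f (v.sub w) = ip f v - ip f w := by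
  unfold ip
  rw [← intervalIntegral.integral_sub (hf.intervalIntegrable_mul_val v)
    (hf.intervalIntegrable_mul_val w)]
  congr 1; ext t; simp only [H1.sub]; ring

lemma Coeffs.memLp_res (P : Coeffs) (hf : MemL2 f) (w : H1) :
    MemLp (P.res f w) 2 (volume.restrict (Ι (0 : ℝ) 1)) := by
  have ha' : MemLp (fun t => P.a' t * w.dval t) 2 (volume.restrict (Ι (0 : ℝ) 1)) :=
    w.memLp_dval.mul' (memLp_top_of_ae_abs_le P.a'_meas P.a'_bdd)
  exact ((hf.memLp.add ha').sub (P.memLp_b_mul_dval w)).sub (P.memLp_c_mul_val w)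

end UnitInterval

section Mesh

open Set
open scoped Interval

namespace Mesh

variable {N : ℕ} (m : Mesh N) {i j : ℕ}

lemma h_pos (hi : i < N) : 0 < m.h i := sub_pos.2 (m.x_mono i hi)

lemma x_le_x (hij : i ≤ j) (hj : j ≤ N) : m.x i ≤ m.x j := by
  induction j, hij using Nat.le_induction with
  | base => exact le_rfl
  | succ k _ ih => exact (ih (by omega)).trans (m.x_mono k (by omega)).le

lemma x_mem_uIcc (hi : i ≤ N) : m.x i ∈ uIcc (0 : ℝ) 1 :=
  Icc_subset_uIcc ⟨m.x_zero ▸ m.x_le_x (Nat.zero_le i) hi, m.x_last ▸ m.x_le_x hi le_rfl⟩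

lemma uIcc_x_subset (hi : i < N) : uIcc (m.x i) (m.x (i + 1)) ⊆ uIcc 0 1 :=
  uIcc_subset_uIcc (m.x_mem_uIcc hi.le) (m.x_mem_uIcc hi)

lemma sum_integral {g : ℝ → ℝ} (hg : IntervalIntegrable g volume 0 1) :
    ∑ i ∈ Finset.range N, ∫ t in (m.x i)..(m.x (i + 1)), g t = ∫ t in (0 : ℝ)..1, g t := by
  rw [intervalIntegral.sum_integral_adjacent_intervals (a := m.x) fun k hk =>
    hg.mono_set (m.uIcc_x_subset hk), m.x_zero, m.x_last]

variable {m} in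
lemma IsPL.integral_dval_mul_eq_zero {v : H1} (hv : m.IsPL v) {G g : ℝ → ℝ}
    (hG : HasACDeriv G g 0 1) (hnodes : ∀ i ≤ N, G (m.x i) = 0)
    (hint : IntervalIntegrable (fun t => v.dval t * g t) volume 0 1) :
    ∫ t in (0 : ℝ)..1, v.dval t * g t = 0 := by
  rw [← m.sum_integral hint]
  refine Finset.sum_eq_zero fun i hi => ?_
  have hiN : i < N := Finset.mem_range.1 hi
  obtain ⟨s, hs⟩ := hv i hiN
  calc ∫ t in (m.x i)..(m.x (i + 1)), v.dval t * g t
      = ∫ t in (m.x i)..(m.x (i + 1)), s * g t :=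
        intervalIntegral.integral_congr_Ioo_of_le (m.x_mono i hiN).le fun t ht => by
          simp only [hs t ht]
    _ = s * (G (m.x (i + 1)) - G (m.x i)) := by
        rw [intervalIntegral.integral_const_mul, (hG.mono (m.uIcc_x_subset hiN)).integral_eq_sub]
    _ = 0 := by rw [hnodes i hiN.le, hnodes (i + 1) hiN, sub_self, mul_zero]

/-- The piecewise constant function with value `s i` inside the element of index `i`; it is `0` at
the mesh points. -/
def piecewiseConst (s : ℕ → ℝ) (t : ℝ) : ℝ :=
  ∑ i ∈ Finset.range N, (Ioo (m.x i) (m.x (i + 1))).indicator (fun _ => s i) t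

lemma piecewiseConst_eq (s : ℕ → ℝ) (hi : i < N) {t : ℝ} (ht : t ∈ Ioo (m.x i) (m.x (i + 1))) :
    m.piecewiseConst s t = s i := by
  rw [piecewiseConst, Finset.sum_eq_single_of_mem i (Finset.mem_range.2 hi), indicator_of_mem ht]
  intro j hj hji
  rw [Finset.mem_range] at hj
  refine indicator_of_notMem (fun htj => ?_) _
  rcases lt_or_gt_of_ne hji with hlt | hgt
  · exact (htj.2.trans_le (m.x_le_x hlt hi.le)).not_gt ht.1
  · exact (ht.2.trans_le (m.x_le_x hgt hj.le)).not_gt htj.1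

lemma memL2_piecewiseConst (s : ℕ → ℝ) : MemL2 (m.piecewiseConst s) :=
  ⟨Finset.measurable_fun_sum _ fun _ _ => measurable_const.indicator measurableSet_Ioo,
    intervalIntegrable_sq_of_memLp_two
      (memLp_finsetSum _ fun i _ => (memLp_const (s i)).indicator measurableSet_Ioo)⟩

variable (v : H1)

/-- The continuous piecewise linear interpolant of `v` at the mesh points. -/
def interp : H1 :=
  H1.ofDeriv (v.val 0)
    (m.piecewiseConst fun i => (v.val (m.x (i + 1)) - v.val (m.x i)) / m.h i)
    (m.memL2_piecewiseConst _)

lemma interp_dval (hi : i < N) {t : ℝ} (ht : t ∈ Ioo (m.x i) (m.x (i + 1))) :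
    (m.interp v).dval t = (v.val (m.x (i + 1)) - v.val (m.x i)) / m.h i :=
  m.piecewiseConst_eq _ hi ht

lemma interp_isPL : m.IsPL (m.interp v) :=
  fun _ hi => ⟨_, fun _ ht => m.interp_dval v hi ht⟩

lemma interp_val_x (hi : i ≤ N) : (m.interp v).val (m.x i) = v.val (m.x i) := by
  induction i with
  | zero => simp only [m.x_zero, interp, H1.ofDeriv, intervalIntegral.integral_same, add_zero]
  | succ k ih =>
    have hk : k < N := hi
    have increment : (m.interp v).val (m.x (k + 1)) - (m.interp v).val (m.x k)
        = v.val (m.x (k + 1)) - v.val (m.x k) := by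
      rw [← ((m.interp v).hasACDeriv.mono (m.uIcc_x_subset hk)).integral_eq_sub,
        intervalIntegral.integral_congr_Ioo_of_le (m.x_mono k hk).le
          fun t ht => m.interp_dval v hk ht,
        intervalIntegral.integral_const, smul_eq_mul]
      exact mul_div_cancel₀ _ (m.h_pos hk).ne'
    linarith [ih hk.le]

lemma sub_interp_val_x (hi : i ≤ N) : (v.sub (m.interp v)).val (m.x i) = 0 :=
  sub_eq_zero.2 (m.interp_val_x v hi).symm

lemma integral_sub_interp_dval_sq_le (hi : i < N) :
    ∫ t in (m.x i)..(m.x (i + 1)), (v.sub (m.interp v)).dval t ^ 2 ≤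
      ∫ t in (m.x i)..(m.x (i + 1)), v.dval t ^ 2 := by
  set w := v.sub (m.interp v)
  have hx : m.x i ≤ m.x (i + 1) := (m.x_mono i hi).le
  have hmean : ∫ t in (m.x i)..(m.x (i + 1)), w.dval t = 0 := by
    rw [(w.hasACDeriv.mono (m.uIcc_x_subset hi)).integral_eq_sub, m.sub_interp_val_x v hi,
      m.sub_interp_val_x v hi.le, sub_self]
  obtain ⟨s, hs⟩ := m.interp_isPL v i hi
  calc ∫ t in (m.x i)..(m.x (i + 1)), w.dval t ^ 2
      ≤ ∫ t in (m.x i)..(m.x (i + 1)), (w.dval t + s) ^ 2 :=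
        integral_sq_le_integral_add_const_sq hx
          (memLp_restrict_uIoc_mono w.memLp_dval (m.uIcc_x_subset hi)) hmean s
    _ = ∫ t in (m.x i)..(m.x (i + 1)), v.dval t ^ 2 :=
        intervalIntegral.integral_congr_Ioo_of_le hx fun t ht => by
          simp only [w, H1.sub, hs t ht, sub_add_cancel]

lemma integral_sub_interp_val_sq_le (hi : i < N) :
    ∫ t in (m.x i)..(m.x (i + 1)), (v.sub (m.interp v)).val t ^ 2 ≤
      m.h i ^ 2 * ∫ t in (m.x i)..(m.x (i + 1)), v.dval t ^ 2 :=
  (((v.sub (m.interp v)).hasACDeriv.mono (m.uIcc_x_subset hi)).integral_sq_le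
    (memLp_restrict_uIoc_mono (v.sub (m.interp v)).memLp_dval (m.uIcc_x_subset hi))
    (m.x_mono i hi).le (m.sub_interp_val_x v hi.le)).trans
    (mul_le_mul_of_nonneg_left (m.integral_sub_interp_dval_sq_le v hi) (sq_nonneg _))

lemma sq_integral_mul_sub_interp_le {r : ℝ → ℝ} (hr : MemLp r 2 (volume.restrict (Ι (0 : ℝ) 1))) :
    (∫ t in (0 : ℝ)..1, r t * (v.sub (m.interp v)).val t) ^ 2 ≤
      (∑ i ∈ Finset.range N, m.h i ^ 2 * ∫ t in (m.x i)..(m.x (i + 1)), r t ^ 2)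
        * ∫ t in (0 : ℝ)..1, v.dval t ^ 2 := by
  set w := v.sub (m.interp v)
  have integral_sq_nonneg (g : ℝ → ℝ) {i : ℕ} (hi : i ∈ Finset.range N) :
      0 ≤ ∫ t in (m.x i)..(m.x (i + 1)), g t ^ 2 :=
    intervalIntegral.integral_nonneg_of_forall (m.x_mono i (Finset.mem_range.1 hi)).le
      fun t => sq_nonneg (g t)
  rw [← m.sum_integral (intervalIntegrable_mul_of_memLp_two hr w.memLp_val),
    ← m.sum_integral v.dval_sq_int]
  refine Finset.sum_sq_le_sum_mul_sum_of_sq_le_mul _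
    (fun i hi => mul_nonneg (sq_nonneg _) (integral_sq_nonneg r hi))
    (fun i hi => integral_sq_nonneg v.dval hi) fun i hi => ?_
  have hiN : i < N := Finset.mem_range.1 hi
  have hsub := m.uIcc_x_subset hiN
  calc (∫ t in (m.x i)..(m.x (i + 1)), r t * w.val t) ^ 2
      ≤ (∫ t in (m.x i)..(m.x (i + 1)), r t ^ 2) * ∫ t in (m.x i)..(m.x (i + 1)), w.val t ^ 2 :=
        sq_intervalIntegral_mul_le (memLp_restrict_uIoc_mono hr hsub)
          (memLp_restrict_uIoc_mono w.memLp_val hsub)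
    _ ≤ (∫ t in (m.x i)..(m.x (i + 1)), r t ^ 2)
          * (m.h i ^ 2 * ∫ t in (m.x i)..(m.x (i + 1)), v.dval t ^ 2) :=
        mul_le_mul_of_nonneg_left (m.integral_sub_interp_val_sq_le v hiN)
          (integral_sq_nonneg r hi)
    _ = _ := by ring

end Mesh

namespace Coeffs

variable (P : Coeffs) {f : ℝ → ℝ} {N : ℕ} {m : Mesh N}

lemma ip_sub_B_eq_integral_res_mul (hf : MemL2 f) {v w : H1} (hv : m.IsPL v)
    (hw : ∀ i ≤ N, w.val (m.x i) = 0) :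
    ip f w - P.B v w = ∫ t in (0 : ℝ)..1, P.res f v t * w.val t := by
  have hweak := (hf.intervalIntegrable_mul_val w).sub (P.intervalIntegrable_B v w)
  have hstrong := intervalIntegrable_mul_of_memLp_two (P.memLp_res hf v) w.memLp_val
  have hdiff : ∀ t, P.res f v t * w.val t - (f t * w.val t - (P.a t * v.dval t * w.dval t
      + P.b t * v.dval t * w.val t + P.c t * v.val t * w.val t))
      = v.dval t * (P.a' t * w.val t + P.a t * w.dval t) := fun t => by rw [res]; ring
  have horth := hv.integral_dval_mul_eq_zero (P.hasACDeriv_a.mul w.hasACDeriv)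
    (fun i hi => by rw [hw i hi, mul_zero])
    ((hstrong.sub hweak).congr fun t _ => hdiff t)
  rw [ip, B, ← intervalIntegral.integral_sub (hf.intervalIntegrable_mul_val w)
    (P.intervalIntegrable_B v w), eq_comm, ← sub_eq_zero,
    ← intervalIntegral.integral_sub hstrong hweak]
  simpa only [hdiff] using horth

variable {P} {u uh : H1}

lemma IsWeakSolution.B_sub_eq_integral_res_mul (hu : P.IsWeakSolution f u)
    (huh : P.IsFESolution f m uh) (hf : MemL2 f) {v : H1} (h0 : v.val 0 = 0) (h1 : v.val 1 = 0) :
    P.B (u.sub uh) v = ∫ t in (0 : ℝ)..1, P.res f uh t * (v.sub (m.interp v)).val t := by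
  have hI0 : (m.interp v).val 0 = 0 := by
    simpa only [m.x_zero, h0] using m.interp_val_x v N.zero_le
  have hI1 : (m.interp v).val 1 = 0 := by
    simpa only [m.x_last, h1] using m.interp_val_x v le_rfl
  have galerkin : P.B uh (m.interp v) = ip f (m.interp v) :=
    huh.2.2.2 _ hI0 hI1 (m.interp_isPL v)
  rw [← P.ip_sub_B_eq_integral_res_mul hf huh.2.2.1 fun i hi => m.sub_interp_val_x v hi,
    P.B_sub_left, hu.2.2 v h0 h1, hf.ip_sub, P.B_sub_right, galerkin]
  ring

lemma IsWeakSolution.a0_sq_mul_integral_sub_dval_sq_le (hu : P.IsWeakSolution f u)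
    (huh : P.IsFESolution f m uh) (hf : MemL2 f) :
    P.a0 ^ 2 * ∫ t in (0 : ℝ)..1, (u.sub uh).dval t ^ 2 ≤
      ∑ i ∈ Finset.range N, m.h i ^ 2 * ∫ t in (m.x i)..(m.x (i + 1)), P.res f uh t ^ 2 := by
  set e := u.sub uh
  set E := ∫ t in (0 : ℝ)..1, e.dval t ^ 2
  set S := ∑ i ∈ Finset.range N, m.h i ^ 2 * ∫ t in (m.x i)..(m.x (i + 1)), P.res f uh t ^ 2
  have he0 : e.val 0 = 0 := by simp only [e, H1.sub, hu.1, huh.1, sub_self]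
  have he1 : e.val 1 = 0 := by simp only [e, H1.sub, hu.2.1, huh.2.1, sub_self]
  have hE : 0 ≤ E :=
    intervalIntegral.integral_nonneg_of_forall zero_le_one fun t => sq_nonneg (e.dval t)
  have hS : 0 ≤ S := Finset.sum_nonneg fun i hi => mul_nonneg (sq_nonneg _)
    (intervalIntegral.integral_nonneg_of_forall (m.x_mono i (Finset.mem_range.1 hi)).le
      fun t => sq_nonneg (P.res f uh t))
  have hcoercive : P.a0 * E ≤ P.B e e :=
    (P.a0_mul_integral_dval_sq_le_energySq e).trans_eq (P.B_self_eq_energySq he0 he1).symm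
  have hsq : P.a0 ^ 2 * E * E ≤ S * E :=
    calc P.a0 ^ 2 * E * E = (P.a0 * E) ^ 2 := by ring
      _ ≤ P.B e e ^ 2 := pow_le_pow_left₀ (mul_nonneg P.a0_pos.le hE) hcoercive 2
      _ = (∫ t in (0 : ℝ)..1, P.res f uh t * (e.sub (m.interp e)).val t) ^ 2 := by
          rw [hu.B_sub_eq_integral_res_mul huh hf he0 he1]
      _ ≤ S * E := m.sq_integral_mul_sub_interp_le e (P.memLp_res hf uh)
  rcases hE.eq_or_lt with hE0 | hEpos
  · rwa [← hE0, mul_zero]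
  · exact le_of_mul_le_mul_right hsq hEpos

end Coeffs

end Mesh

/-- the residual-based a posteriori error estimate (Lemma 3.5). -/
theorem statement8 (P : Coeffs) :
    ∃ C : ℝ, 0 < C ∧
      ∀ f : ℝ → ℝ, MemL2 f →
      ∀ u : H1, P.IsWeakSolution f u →
      ∀ (N : ℕ) (m : Mesh N) (uh : H1), P.IsFESolution f m uh →
        (L2 (fun t => u.dval t - uh.dval t))^2
          ≤ C * ∑ i ∈ Finset.range N,
              (m.h i)^2 * ∫ t in (m.x i)..(m.x (i+1)), (P.res f uh t)^2 := by
  have hpos : 0 < P.a0 ^ 2 := pow_pos P.a0_pos 2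
  refine ⟨(P.a0 ^ 2)⁻¹, inv_pos.2 hpos, fun f hf u hu N m uh huh => ?_⟩
  rw [L2_sq, le_inv_mul_iff₀ hpos]
  exact hu.a0_sq_mul_integral_sub_dval_sq_le huh hf

end EquidMesh
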